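/- arXiv:1610.03528 — 2 statements merged into one kernel-verified Lean document; each statement's English description precedes it below -/
import Mathlib

section
/- The affine rational points on the curve defined by y² = 2(x³ + 12x² + 48x + 72) are exactly (0, 12), (0, −12), (−4, 4), (−4, −4), and (−6, 0). That is, for x, y ∈ ℚ, y² = 2(x³ + 12x² + 48x + 72) holds if and only if (x, y) is one of these five pairs. -/
lemma pw36 {f g C : ℤ} {k : ℕ} (hk : k ≠ 0) (hf : 0 < f) (h : IsCoprime f g)
    (e : f * g = C ^ k) : ∃ d : ℤ, 0 < d ∧ f = d ^ k := by
  have hu : IsUnit (gcd f g) := by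
    obtain ⟨x, y, hxy⟩ := h
    refine isUnit_of_dvd_one ?_
    rw [← hxy]
    exact dvd_add ((gcd_dvd_left f g).mul_left x) ((gcd_dvd_right f g).mul_left y)
  obtain ⟨d, hd⟩ := exists_associated_pow_of_mul_eq_pow hu e
  have h1 : |d| ^ k = f := by
    rw [← abs_pow]
    rcases Int.associated_iff.mp hd with h | h
    · rw [h, abs_of_pos hf]
    · rw [h, abs_neg, abs_of_pos hf]
  refine ⟨|d|, ?_, h1.symm⟩
  rcases (abs_nonneg d).lt_or_eq with h2 | h2
  · exact h2
  · rw [← h2, zero_pow hk] at h1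
    omega

lemma quart36 {f g B : ℤ} (hf : 0 < f) (hg : 0 < g) (hB : 0 < B) (h : IsCoprime f g)
    (e : f * g = 3 * B ^ 4) (h3 : (3 : ℤ) ∣ f) :
    ∃ X Y : ℤ, 0 < X ∧ 0 < Y ∧ X * Y = B ∧ f = 3 * X ^ 4 ∧ g = Y ^ 4 := by
  obtain ⟨f', rfl⟩ := h3
  have e' : f' * g = B ^ 4 := by linarith
  have hf' : 0 < f' := by omega
  have hc : IsCoprime f' g := h.of_mul_left_right
  obtain ⟨X, hX, rfl⟩ := pw36 (by norm_num) hf' hc e'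
  obtain ⟨Y, hY, rfl⟩ := pw36 (k := 4) (C := B) (by norm_num) hg hc.symm (by rw [mul_comm]; exact e')
  refine ⟨X, Y, hX, hY, ?_, rfl, rfl⟩
  rw [← mul_pow] at e'
  exact (pow_left_inj₀ (by positivity) hB.le (by norm_num)).mp e'

lemma quart36' {f g B : ℤ} (hf : 0 < f) (hg : 0 < g) (hB : 0 < B) (h : IsCoprime f g)
    (e : f * g = 3 * B ^ 4) :
    ∃ X Y : ℤ, 0 < X ∧ 0 < Y ∧ X * Y = B ∧
      ((f = 3 * X ^ 4 ∧ g = Y ^ 4) ∨ (g = 3 * X ^ 4 ∧ f = Y ^ 4)) := by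
  have h3 : (3 : ℤ) ∣ f * g := ⟨_, e⟩
  rcases Int.prime_three.dvd_or_dvd h3 with h3 | h3
  · obtain ⟨X, Y, h1, h2, h3, h4⟩ := quart36 hf hg hB h e h3
    exact ⟨X, Y, h1, h2, h3, Or.inl h4⟩
  · obtain ⟨X, Y, h1, h2, h3, h4⟩ := quart36 hg hf hB h.symm (by rw [mul_comm]; exact e) h3
    exact ⟨X, Y, h1, h2, h3, Or.inr h4⟩

lemma no36 {a Y k : ℤ} (h : IsCoprime a 3) (e : a ^ 2 + Y ^ 4 = 3 * k) : False := by
  have ha : ¬ (3 : ℤ) ∣ a := fun hd => by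
    have := h.isUnit_of_dvd' hd dvd_rfl
    exact Int.prime_three.not_isUnit this
  have h1 : (a ^ 2 + Y ^ 4) % 3 = 0 := by omega
  have h2 : a % 3 = 1 ∨ a % 3 = 2 := by omega
  have h3 : Y % 3 = 0 ∨ Y % 3 = 1 ∨ Y % 3 = 2 := by omega
  rcases h2 with h2 | h2 <;> rcases h3 with h3 | h3 | h3 <;>
    simp [Int.add_emod, pow_succ, Int.mul_emod, h2, h3] at h1

lemma cop36a {f g : ℤ} (h : IsCoprime (f + g) (f * g)) : IsCoprime f g := by
  have h1 := h.of_mul_right_right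
  have h2 : IsCoprime (f + g * 1) g := by simpa using h1
  exact h2.of_add_mul_left_left

lemma cop36s {f g : ℤ} (h : IsCoprime (f - g) (f * g)) : IsCoprime f g := by
  have h1 := h.of_mul_right_right
  have h2 : IsCoprime (f + g * (-1)) g := by simpa [sub_eq_add_neg] using h1
  exact h2.of_add_mul_left_left

lemma cop36two {f : ℤ} (h : f % 2 = 1) : IsCoprime 2 f :=
  ⟨-(f / 2), 1, by omega⟩

/-- positivity of both factors -/
lemma pos36 {f g s p : ℤ} (hs : f + g = s) (hs0 : 0 < s) (hp : f * g = p) (hp0 : 0 < p) :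
    0 < f ∧ 0 < g := by
  rcases mul_pos_iff.mp (hp ▸ hp0) with h | h
  · exact h
  · omega

/-- One descent step, with `e = 1` (odd case) or general shape. -/
lemma step36 {a b c : ℤ} (ha : 0 < a) (hb : 0 < b) (hc : 0 < c) (hab : IsCoprime a b)
    (ha3 : IsCoprime a 3) (h : a ^ 4 - 3 * a ^ 2 * b ^ 2 + 3 * b ^ 4 = c ^ 2) :
    ∃ T S X : ℤ, 0 < T ∧ 0 < S ∧ 0 < X ∧ IsCoprime T S ∧ IsCoprime T 3 ∧
      T ^ 4 - 3 * T ^ 2 * S ^ 2 + 3 * S ^ 4 = X ^ 2 ∧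
      ((b = X * (S * T) ∧ 4 * a ^ 2 = X ^ 4 + 6 * X ^ 2 * (S * T) ^ 2 - 3 * (S * T) ^ 4) ∨
       (b = 2 * (X * (S * T)) ∧ a ^ 2 = X ^ 4 + 6 * X ^ 2 * (S * T) ^ 2 - 3 * (S * T) ^ 4)) := by
  have hcb : IsCoprime c b := by
    have h1 : IsCoprime (a ^ 4 + b * (- 3 * a ^ 2 * b + 3 * b ^ 3)) b :=
      (hab.pow_left).add_mul_left_left _
    have h2 : a ^ 4 + b * (- 3 * a ^ 2 * b + 3 * b ^ 3) = c ^ 2 := by rw [← h]; ring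
    rw [h2] at h1
    exact (IsCoprime.pow_left_iff (by norm_num)).mp h1
  have hc3 : IsCoprime c 3 := by
    have h1 : IsCoprime (a ^ 4 + 3 * (- a ^ 2 * b ^ 2 + b ^ 4)) 3 :=
      (ha3.pow_left).add_mul_left_left _
    have h2 : a ^ 4 + 3 * (- a ^ 2 * b ^ 2 + b ^ 4) = c ^ 2 := by rw [← h]; ring
    rw [h2] at h1
    exact (IsCoprime.pow_left_iff (by norm_num)).mp h1
  rcases Int.emod_two_eq_zero_or_one b with hbp | hbp
  · -- b even
    obtain ⟨B, rfl⟩ : ∃ B, b = 2 * B := ⟨b / 2, by omega⟩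
    have hB : 0 < B := by omega
    have hap : a % 2 = 1 := by
      by_contra hap
      have := hab.isUnit_of_dvd' (show (2 : ℤ) ∣ a by omega) ⟨B, rfl⟩
      exact Int.prime_two.not_isUnit this
    have hcp : c % 2 = 1 := by
      by_contra hcp
      have := hcb.isUnit_of_dvd' (show (2 : ℤ) ∣ c by omega) ⟨B, rfl⟩
      exact Int.prime_two.not_isUnit this
    have ha2 : a ^ 2 % 2 = 1 := by simp [pow_two, Int.mul_emod, hap]
    obtain ⟨g, hg⟩ : ∃ g, c + a ^ 2 - 6 * B ^ 2 = 2 * g :=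
      ⟨(c + a ^ 2 - 6 * B ^ 2) / 2, by omega⟩
    obtain ⟨f, hf⟩ : ∃ f, c - a ^ 2 + 6 * B ^ 2 = 2 * f :=
      ⟨(c - a ^ 2 + 6 * B ^ 2) / 2, by omega⟩
    have hfg : f * g = 3 * B ^ 4 := by
      have : (2 * f) * (2 * g) = 12 * B ^ 4 := by
        rw [← hf, ← hg]; linear_combination -h
      linarith
    have hs : f + g = c := by linarith
    obtain ⟨hf0, hg0⟩ := pos36 hs hc hfg (by positivity)
    have hco : IsCoprime f g := by
      apply cop36a
      rw [hs, hfg]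
      exact hc3.mul_right (hcb.of_mul_right_right.pow_right)
    obtain ⟨Y, X, hY, hX, hXY, ⟨e1, e2⟩ | ⟨e1, e2⟩⟩ := quart36' hf0 hg0 hB hco hfg
    swap
    · exfalso
      refine no36 (Y := X) (k := Y ^ 4 + 2 * X ^ 2 * Y ^ 2) ha3 ?_
      rw [← hXY] at hf hg
      rw [e1] at hg; rw [e2] at hf
      linarith
    have e3 : a ^ 2 = X ^ 4 + 6 * X ^ 2 * Y ^ 2 - 3 * Y ^ 4 := by
      rw [← hXY] at hf hg
      rw [e1] at hf; rw [e2] at hg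
      linarith
    have hYB : IsCoprime a Y := by
      have : IsCoprime a (2 * (Y * X)) := hXY ▸ hab
      exact this.of_mul_right_right.of_mul_right_left
    have hpar : (X ^ 2 + 3 * Y ^ 2) % 2 = 1 := by
      have h4 : (X ^ 4 + 6 * X ^ 2 * Y ^ 2 - 3 * Y ^ 4) % 2 = 1 := by rw [← e3]; exact ha2
      rcases Int.emod_two_eq_zero_or_one X with hx | hx <;>
      rcases Int.emod_two_eq_zero_or_one Y with hy | hy <;>
      simp [Int.add_emod, Int.sub_emod, pow_succ, Int.mul_emod, hx, hy] at h4 ⊢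
    obtain ⟨F, hF⟩ : ∃ F, X ^ 2 + 3 * Y ^ 2 + a = 2 * F :=
      ⟨(X ^ 2 + 3 * Y ^ 2 + a) / 2, by omega⟩
    obtain ⟨G, hG⟩ : ∃ G, X ^ 2 + 3 * Y ^ 2 - a = 2 * G :=
      ⟨(X ^ 2 + 3 * Y ^ 2 - a) / 2, by omega⟩
    have hFG : F * G = 3 * Y ^ 4 := by
      have : (2 * F) * (2 * G) = 12 * Y ^ 4 := by
        rw [← hF, ← hG]; linear_combination -e3
      linarith
    have hS : F + G = X ^ 2 + 3 * Y ^ 2 := by linarith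
    obtain ⟨hF0, hG0⟩ := pos36 hS (by positivity) hFG (by positivity)
    have hCo : IsCoprime F G := by
      apply cop36s
      rw [show F - G = a by linarith, hFG]
      exact ha3.mul_right hYB.pow_right
    obtain ⟨S, T, hS0, hT0, hST, hh⟩ := quart36' hF0 hG0 hY hCo hFG
    have hk : IsCoprime (3 * S ^ 4) (T ^ 4) := by
      rcases hh with ⟨u, v⟩ | ⟨u, v⟩
      · rw [← u, ← v]; exact hCo
      · rw [← u, ← v]; exact hCo.symm
    have hsum : 3 * S ^ 4 + T ^ 4 = X ^ 2 + 3 * Y ^ 2 := by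
      rcases hh with ⟨u, v⟩ | ⟨u, v⟩ <;> linarith
    have hT3 : IsCoprime T 3 :=
      ((IsCoprime.pow_right_iff (by norm_num)).mp hk.of_mul_left_left).symm
    have hTS : IsCoprime T S :=
      ((IsCoprime.pow_iff (by norm_num) (by norm_num)).mp hk.of_mul_left_right).symm
    refine ⟨T, S, X, hT0, hS0, hX, hTS, hT3, ?_, Or.inr ⟨?_, ?_⟩⟩
    · rw [← hST] at hsum; linarith
    · rw [hST, mul_comm X Y, hXY]
    · rw [hST]; exact e3
  · -- b odd
    have hfg : (2 * c - 2 * a ^ 2 + 3 * b ^ 2) * (2 * c + 2 * a ^ 2 - 3 * b ^ 2) = 3 * b ^ 4 := by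
      linear_combination -4 * h
    obtain ⟨f, hf⟩ : ∃ f, 2 * c - 2 * a ^ 2 + 3 * b ^ 2 = f := ⟨_, rfl⟩
    obtain ⟨g, hg⟩ : ∃ g, 2 * c + 2 * a ^ 2 - 3 * b ^ 2 = g := ⟨_, rfl⟩
    rw [hf, hg] at hfg
    have hs : f + g = 4 * c := by linarith
    obtain ⟨hf0, hg0⟩ := pos36 hs (by omega) hfg (by positivity)
    have h2b : IsCoprime 2 b := cop36two hbp
    have hco : IsCoprime f g := by
      apply cop36a
      rw [hs, hfg]
      refine IsCoprime.mul_left ?_ (hc3.mul_right hcb.pow_right)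
      refine IsCoprime.mul_right ⟨1, -1, by norm_num⟩ (IsCoprime.pow_right ?_)
      rw [show (4 : ℤ) = 2 * 2 by norm_num]
      exact h2b.mul_left h2b
    obtain ⟨Y, X, hY, hX, hXY, ⟨e1, e2⟩ | ⟨e1, e2⟩⟩ := quart36' hf0 hg0 hb hco hfg
    swap
    · exfalso
      refine no36 (Y := X) (k := Y ^ 4 + 2 * X ^ 2 * Y ^ 2 - a ^ 2) ha3 ?_
      rw [← hXY] at hf hg
      rw [e1] at hg; rw [e2] at hf
      linarith
    have e3 : 4 * a ^ 2 = X ^ 4 + 6 * X ^ 2 * Y ^ 2 - 3 * Y ^ 4 := by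
      rw [← hXY] at hf hg
      rw [e1] at hf; rw [e2] at hg
      linarith
    have hXo : X % 2 = 1 := by
      rcases Int.emod_two_eq_zero_or_one X with hx | hx
      · rw [← hXY, Int.mul_emod, hx] at hbp; simp at hbp
      · exact hx
    have hYo : Y % 2 = 1 := by
      rcases Int.emod_two_eq_zero_or_one Y with hx | hx
      · rw [← hXY, Int.mul_emod, hx] at hbp; simp at hbp
      · exact hx
    have hYB : IsCoprime a Y := by
      have : IsCoprime a (Y * X) := hXY ▸ hab
      exact this.of_mul_right_left
    obtain ⟨H, hH⟩ : ∃ H, X ^ 2 + 3 * Y ^ 2 = 2 * H := by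
      have : (X ^ 2 + 3 * Y ^ 2) % 2 = 0 := by
        simp [Int.add_emod, pow_succ, Int.mul_emod, hXo, hYo]
      exact ⟨(X ^ 2 + 3 * Y ^ 2) / 2, by omega⟩
    have hFG : (H + a) * (H - a) = 3 * Y ^ 4 := by
      have : (2 * H) ^ 2 - 4 * a ^ 2 = 12 * Y ^ 4 := by
        rw [← hH]; linear_combination -e3
      linarith
    have hHp : 0 < 2 * H := by rw [← hH]; positivity
    have hS : (H + a) + (H - a) = 2 * H := by ring
    obtain ⟨hF0, hG0⟩ := pos36 hS hHp hFG (by positivity)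
    have hCo : IsCoprime (H + a) (H - a) := by
      apply cop36s
      rw [show (H + a) - (H - a) = 2 * a by ring, hFG]
      exact IsCoprime.mul_left (IsCoprime.mul_right ⟨-1, 1, by norm_num⟩
        (cop36two hYo).pow_right) (ha3.mul_right hYB.pow_right)
    obtain ⟨S, T, hS0, hT0, hST, hh⟩ := quart36' hF0 hG0 hY hCo hFG
    have hk : IsCoprime (3 * S ^ 4) (T ^ 4) := by
      rcases hh with ⟨u, v⟩ | ⟨u, v⟩
      · rw [← u, ← v]; exact hCo
      · rw [← u, ← v]; exact hCo.symm
    have hsum : 3 * S ^ 4 + T ^ 4 = X ^ 2 + 3 * Y ^ 2 := by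
      rcases hh with ⟨u, v⟩ | ⟨u, v⟩ <;> linarith
    have hT3 : IsCoprime T 3 :=
      ((IsCoprime.pow_right_iff (by norm_num)).mp hk.of_mul_left_left).symm
    have hTS : IsCoprime T S :=
      ((IsCoprime.pow_iff (by norm_num) (by norm_num)).mp hk.of_mul_left_right).symm
    refine ⟨T, S, X, hT0, hS0, hX, hTS, hT3, ?_, Or.inl ⟨?_, ?_⟩⟩
    · rw [← hST] at hsum; linarith
    · rw [hST, mul_comm X Y, hXY]
    · rw [hST]; exact e3

lemma desc36 (N : ℕ) : ∀ a b c : ℤ, b ≤ N → 0 < a → 0 < b → 0 < c → IsCoprime a b →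
    IsCoprime a 3 → a ^ 4 - 3 * a ^ 2 * b ^ 2 + 3 * b ^ 4 = c ^ 2 → a = 1 ∧ b = 1 := by
  induction N with
  | zero => intro a b c h1 _ h2; simp at h1; omega
  | succ N ih =>
    intro a b c hN ha hb hc hab ha3 h
    obtain ⟨T, S, X, hT, hS, hX, hTS, hT3, e, hh⟩ := step36 ha hb hc hab ha3 h
    have hTS1 : T = 1 ∧ S = 1 := by
      by_cases hlt : S ≤ N
      · exact ih T S X hlt hT hS hX hTS hT3 e
      · push Not at hlt
        have hbS : b ≤ S := by push_cast at hN; omega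
        have h1 : X * T = 1 := by
          have hp : 0 < X * T := by positivity
          rcases hh with ⟨h1, -⟩ | ⟨h1, -⟩ <;> nlinarith
        have hX1 : X = 1 := by nlinarith
        have hT1 : T = 1 := by nlinarith
        subst hX1 hT1
        refine ⟨rfl, ?_⟩
        have h2 : S ^ 2 * ((S - 1) * (S + 1)) = 0 := by linarith
        have h3 : S ^ 2 ≠ 0 := by positivity
        have h4 : S + 1 ≠ 0 := by omega
        simp only [mul_eq_zero, h3, h4, or_false, false_or] at h2
        omega
    obtain ⟨rfl, rfl⟩ := hTS1
    have hX1 : X = 1 := by nlinarith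
    subst hX1
    rcases hh with ⟨h1, h2⟩ | ⟨h1, h2⟩
    · exact ⟨by nlinarith, by linarith⟩
    · exfalso
      have ha2 : a = 2 := by nlinarith
      subst ha2
      have := hab.isUnit_of_dvd' dvd_rfl (show (2 : ℤ) ∣ b by omega)
      exact Int.prime_two.not_isUnit this

lemma cub36 {p q z : ℤ} (hp : 0 < p) (hq : 0 < q) (hpq : IsCoprime p q) (hp3 : IsCoprime p 3)
    (h : p * q * (p ^ 2 - 3 * p * q + 3 * q ^ 2) = z ^ 2) : p = 1 ∧ q = 1 := by
  have hr : 0 < p ^ 2 - 3 * p * q + 3 * q ^ 2 := by nlinarith [sq_nonneg (2 * p - 3 * q)]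
  obtain ⟨r, hre⟩ : ∃ r, p ^ 2 - 3 * p * q + 3 * q ^ 2 = r := ⟨_, rfl⟩
  rw [hre] at h hr
  have hrp : IsCoprime r p := by
    have h1 : IsCoprime (3 * q ^ 2 + p * (p - 3 * q)) p :=
      (IsCoprime.mul_left hp3.symm hpq.symm.pow_left).add_mul_left_left _
    rwa [show 3 * q ^ 2 + p * (p - 3 * q) = r by rw [← hre]; ring] at h1
  have hrq : IsCoprime r q := by
    have h1 : IsCoprime (p ^ 2 + q * (3 * q - 3 * p)) q :=
      (hpq.pow_left).add_mul_left_left _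
    rwa [show p ^ 2 + q * (3 * q - 3 * p) = r by rw [← hre]; ring] at h1
  obtain ⟨c, hc, hc'⟩ := pw36 (C := z) (g := p * q) two_ne_zero hr (hrp.mul_right hrq) (by linarith)
  obtain ⟨a, ha, rfl⟩ := pw36 (C := z) (g := q * r) two_ne_zero hp (hpq.mul_right hrp.symm)
    (by linarith)
  obtain ⟨b, hb, rfl⟩ := pw36 (C := z) (g := a ^ 2 * r) two_ne_zero hq
    (hpq.symm.mul_right hrq.symm) (by linarith)
  have := desc36 b.toNat a b c (by omega) ha hb hc
    ((IsCoprime.pow_iff (by norm_num) (by norm_num)).mp hpq)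
    ((IsCoprime.pow_left_iff (by norm_num)).mp hp3) (by rw [← hc', ← hre]; ring)
  simp [this.1, this.2]

lemma rat36 {s t : ℚ} (h : t ^ 2 = s * (s ^ 2 - 3 * s + 3)) : s = 0 ∨ s = 1 ∨ s = 3 := by
  by_cases hs0 : s = 0
  · exact Or.inl hs0
  right
  have hs : 0 < s := by
    by_contra hneg
    have h1 : s < 0 := lt_of_le_of_ne (not_lt.mp hneg) hs0
    have h2 : 0 < s ^ 2 - 3 * s + 3 := by nlinarith [sq_nonneg (2 * s - 3)]
    nlinarith [sq_nonneg t]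
  obtain ⟨p, hp⟩ : ∃ p, p = s.num := ⟨_, rfl⟩
  obtain ⟨q, hq⟩ : ∃ q : ℤ, q = s.den := ⟨_, rfl⟩
  have hp0 : 0 < p := by rw [hp]; exact Rat.num_pos.mpr hs
  have hq0 : 0 < q := by rw [hq]; exact_mod_cast s.den_pos
  have hpq : IsCoprime p q := by
    rw [hp, hq]; exact s.isCoprime_num_den
  have hse : s = (p : ℚ) / q := by
    rw [hp, hq]; exact_mod_cast (Rat.num_div_den s).symm
  have hqQ : (q : ℚ) ≠ 0 := by exact_mod_cast hq0.ne'
  have hsq : IsSquare (p * q * (p ^ 2 - 3 * p * q + 3 * q ^ 2)) := by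
    rw [← Rat.isSquare_intCast_iff]
    refine ⟨t * q ^ 2, ?_⟩
    have : (t * q ^ 2) * (t * q ^ 2) = t ^ 2 * (q : ℚ) ^ 4 := by ring
    rw [this, h, hse]
    push_cast
    field_simp
  obtain ⟨z, hz⟩ := hsq
  by_cases h3 : (3 : ℤ) ∣ p
  · right
    obtain ⟨p', hp'⟩ := h3
    have hq3 : IsCoprime q 3 := by
      rw [hp'] at hpq; exact hpq.of_mul_left_left.symm
    have hpq' : IsCoprime q p' := by
      rw [hp'] at hpq; exact hpq.of_mul_left_right.symm
    have hz3 : (3 : ℤ) ∣ z := by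
      have : (3 : ℤ) ∣ z * z := by
        rw [← hz, hp']; exact ⟨p' * q * ((3 * p') ^ 2 - 3 * (3 * p') * q + 3 * q ^ 2), by ring⟩
      exact (Int.prime_three.dvd_or_dvd this).elim id id
    obtain ⟨w, rfl⟩ := hz3
    have := cub36 (z := w) hq0 (by omega) hpq' hq3 (by
      rw [hp'] at hz
      linarith)
    rw [hse, hp', this.1, this.2]; norm_num
  · left
    have hp3 : IsCoprime p 3 := ((Int.prime_three.coprime_iff_not_dvd).mpr h3).symm
    have := cub36 (z := z) hp0 hq0 hpq hp3 (by rw [hz]; ring)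
    rw [hse, this.1, this.2]; norm_num

/-- The affine rational points on the curve
`y² = 2(x³ + 12x² + 48x + 72)` (a model of the elliptic curve 36a1) are exactly
`(0, ±12)`, `(−4, ±4)` and `(−6, 0)`. -/
theorem stmt_15 (x y : ℚ) :
    y ^ 2 = 2 * (x ^ 3 + 12 * x ^ 2 + 48 * x + 72) ↔
      (x = 0 ∧ y = 12) ∨ (x = 0 ∧ y = -12) ∨ (x = -4 ∧ y = 4) ∨ (x = -4 ∧ y = -4) ∨
        (x = -6 ∧ y = 0) := by
  constructor
  · intro h
    have h1 : (y / 4) ^ 2 = ((x + 6) / 2) * (((x + 6) / 2) ^ 2 - 3 * ((x + 6) / 2) + 3) := by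
      linear_combination h / 16
    rcases rat36 h1 with h2 | h2 | h2
    · have hx : x = -6 := by linarith
      subst hx
      have hy : y = 0 := by
        have : y ^ 2 = 0 := by rw [h]; norm_num
        exact pow_eq_zero_iff (two_ne_zero) |>.mp this
      simp [hy]
    · have hx : x = -4 := by linarith
      subst hx
      have hy : (y - 4) * (y + 4) = 0 := by linarith
      rcases mul_eq_zero.mp hy with h3 | h3
      · have : y = 4 := by linarith
        simp [this]
      · have : y = -4 := by linarith
        simp [this]
    · have hx : x = 0 := by linarith
      subst hx
      have hy : (y - 12) * (y + 12) = 0 := by linarith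
      rcases mul_eq_zero.mp hy with h3 | h3
      · have : y = 12 := by linarith
        simp [this]
      · have : y = -12 := by linarith
        simp [this]
  · rintro (⟨rfl, rfl⟩ | ⟨rfl, rfl⟩ | ⟨rfl, rfl⟩ | ⟨rfl, rfl⟩ | ⟨rfl, rfl⟩) <;> norm_num
end

section
/- If t and x are rational numbers with t ≠ 0 such that X² − 2⁸·3⁵·((t − 1)(t + 1)(t² − t + 1)(t² + t + 1))³ vanishes at X = x, i.e., x² = 2⁸·3⁵·(t⁶ − 1)³, then t = 1 or t = −1. -/
theorem aux_split (u v h : ℕ) (hc : Nat.Coprime u v) (huv : u * v = 27 * h ^ 4) :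
    ∃ a b, a * b = h ∧ ((u = a ^ 4 ∧ v = 27 * b ^ 4) ∨ (u = 27 * a ^ 4 ∧ v = b ^ 4)) := by
  have key : ∀ u v : ℕ, Nat.Coprime u v → u * v = 27 * h ^ 4 → ¬ 3 ∣ u →
      ∃ a b, a * b = h ∧ u = a ^ 4 ∧ v = 27 * b ^ 4 := by
    intro u v hc huv h3
    have h1 : Nat.Coprime 27 u := by
      have : Nat.Coprime 3 u := (Nat.Prime.coprime_iff_not_dvd Nat.prime_three).2 h3
      exact Nat.Coprime.pow_left 3 this
    have h2 : 27 ∣ v := h1.dvd_of_dvd_mul_left (Dvd.intro _ huv.symm)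
    obtain ⟨w, rfl⟩ := h2
    have h4 : u * w = h ^ 4 := by nlinarith
    have hcw : Nat.Coprime u w := Nat.Coprime.coprime_mul_left_right hc
    obtain ⟨a, ha⟩ := exists_eq_pow_of_mul_eq_pow (Nat.isUnit_iff.2 hcw) h4
    obtain ⟨b, hb⟩ := exists_eq_pow_of_mul_eq_pow (Nat.isUnit_iff.2 hcw.symm)
      ((mul_comm w u).trans h4)
    refine ⟨a, b, ?_, ha, by rw [hb]⟩
    have : (a * b) ^ 4 = h ^ 4 := by rw [mul_pow, ← ha, ← hb, h4]
    exact Nat.pow_left_injective (by norm_num : (4:ℕ) ≠ 0) this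
  by_cases h3 : 3 ∣ u
  · have h3v : ¬ 3 ∣ v := fun hv => by
      have := Nat.dvd_gcd h3 hv
      rw [hc] at this
      omega
    obtain ⟨a, b, hab, ha, hb⟩ := key v u hc.symm (by rw [mul_comm, huv]) h3v
    exact ⟨b, a, by rw [mul_comm, hab], Or.inr ⟨hb, ha⟩⟩
  · obtain ⟨a, b, hab, ha, hb⟩ := key u v hc huv h3
    exact ⟨a, b, hab, Or.inl ⟨ha, hb⟩⟩

theorem aux_cop (u v h : ℕ) (huv : u * v = 27 * h ^ 4)
    (h3 : ¬ (3 ∣ u ∧ 3 ∣ v)) (hp : ∀ p, p.Prime → p ∣ u → p ∣ v → ¬ p ∣ h) : Nat.Coprime u v := by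
  apply Nat.Coprime.symm
  refine Nat.coprime_of_dvd ?_
  intro p pp hv hu
  have h1 : p ∣ 27 * h ^ 4 := huv ▸ Dvd.dvd.mul_right hu v
  rcases (Nat.Prime.dvd_mul pp).1 h1 with h2 | h2
  · have : p ∣ 3 := pp.dvd_of_dvd_pow (show p ∣ 3 ^ 3 from h2)
    have : p = 3 := (Nat.prime_dvd_prime_iff_eq pp Nat.prime_three).1 this
    subst this
    exact h3 ⟨hu, hv⟩
  · exact hp p pp hu hv (pp.dvd_of_dvd_pow h2)

theorem aux_cop' (a b : ℕ) (h : Nat.Coprime (a ^ 4) (27 * b ^ 4)) :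
    Nat.Coprime a b ∧ ¬ 3 ∣ a := by
  have h1 : Nat.Coprime a (27 * b ^ 4) := (Nat.coprime_pow_left_iff (by norm_num) _ _).1 h
  refine ⟨(Nat.coprime_pow_right_iff (n := 4) (by norm_num) _ _).1
    (Nat.Coprime.coprime_mul_left_right h1), fun h3 => ?_⟩
  have := Nat.dvd_gcd h3 (Dvd.dvd.mul_right (by norm_num : 3 ∣ 27) (b ^ 4))
  rw [h1] at this
  omega

theorem aux_mod3 (f g M : ℕ) (c d : ℕ) (hc : c % 3 = 1) (hM : ¬ 3 ∣ M)
    (h : 27 * g ^ 4 = f ^ 4 + c * M ^ 2 + 3 * d) : False := by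
  have h1 : (f ^ 4 + c * M ^ 2) % 3 = 0 := by omega
  have hM' : M % 3 = 1 ∨ M % 3 = 2 := by omega
  have hf : f % 3 = 0 ∨ f % 3 = 1 ∨ f % 3 = 2 := by omega
  rcases hM' with h2 | h2 <;> rcases hf with h3 | h3 | h3 <;>
    simp [Nat.add_mod, Nat.mul_mod, Nat.pow_mod, h2, h3, hc] at h1

theorem aux_A (M e N : ℕ) (hc : Nat.Coprime M e) (h3 : ¬ 3 ∣ M)
    (h : M ^ 4 + 9 * M ^ 2 * e ^ 2 + 27 * e ^ 4 = N ^ 2) :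
    ∃ f g K : ℕ, Nat.Coprime g f ∧ ¬ 3 ∣ g ∧ K ^ 2 + 18 * f ^ 2 * g ^ 2 + 27 * f ^ 4 = g ^ 4 ∧
      f * g ∣ e := by
  have hco : ∀ p, p.Prime → p ∣ M → ¬ p ∣ e := fun p pp h1 h2 =>
    Nat.not_coprime_of_dvd_of_dvd pp.one_lt h1 h2 hc
  rcases Nat.even_or_odd' e with ⟨k, rfl | hk⟩
  · have hle : M ^ 2 + 18 * k ^ 2 ≤ N := by
      by_contra hlt
      push Not at hlt
      have := Nat.pow_lt_pow_left hlt (n := 2) (by norm_num)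
      nlinarith [sq_nonneg (k ^ 2)]
    obtain ⟨U, rfl⟩ := Nat.exists_eq_add_of_le hle
    have hU : U * (U + 2 * (M ^ 2 + 18 * k ^ 2)) = 108 * k ^ 4 := by nlinarith
    have hUe : 2 ∣ U := by
      have h1 : 2 ∣ U * U := by
        have : U * U + 2 * (U * (M ^ 2 + 18 * k ^ 2)) = 2 * (54 * k ^ 4) := by nlinarith
        omega
      rcases (Nat.Prime.dvd_mul Nat.prime_two).1 h1 with h | h <;> exact h
    obtain ⟨u, rfl⟩ := hUe
    have hu : u * (u + (M ^ 2 + 18 * k ^ 2)) = 27 * k ^ 4 := by nlinarith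
    have hcop := aux_cop _ _ _ hu (by
        rintro ⟨h1, h2⟩
        have h4 : 3 ∣ M ^ 2 := by omega
        exact h3 (Nat.prime_three.dvd_of_dvd_pow h4)) (by
        intro p pp h1 h2 h4
        have h5 := (Nat.dvd_add_right h1).1 h2
        have h6 : p ∣ 18 * k ^ 2 := Dvd.dvd.mul_left (dvd_pow h4 (by norm_num)) _
        exact hco p pp (pp.dvd_of_dvd_pow ((Nat.dvd_add_left h6).1 h5)) (Dvd.dvd.mul_left h4 2))
    obtain ⟨a, b, hab, ⟨h1, h2⟩ | ⟨h1, h2⟩⟩ := aux_split _ _ _ hcop hu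
    · exact (aux_mod3 a b M 1 (6 * k ^ 2) rfl h3 (by rw [← h1, ← h2]; ring)).elim
    · rw [h2, h1] at hcop
      obtain ⟨h4, h5⟩ := aux_cop' b a hcop.symm
      refine ⟨a, b, M, h4, h5, ?_, hab ▸ Dvd.intro_left 2 rfl⟩
      rw [← h2, h1, ← hab]; ring
  · have hle : 2 * M ^ 2 + 9 * e ^ 2 ≤ 2 * N := by
      by_contra hlt
      push Not at hlt
      have := Nat.pow_lt_pow_left hlt (n := 2) (by norm_num)
      nlinarith [sq_nonneg (e ^ 2)]
    obtain ⟨u, hN⟩ := Nat.exists_eq_add_of_le hle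
    have hu : u * (u + (4 * M ^ 2 + 18 * e ^ 2)) = 27 * e ^ 4 := by
      have : (2 * N) ^ 2 = 4 * (M ^ 4 + 9 * M ^ 2 * e ^ 2 + 27 * e ^ 4) := by rw [h]; ring
      rw [hN] at this
      nlinarith
    have hcop := aux_cop _ _ _ hu (by
        rintro ⟨h1, h2⟩
        have h4 : 3 ∣ M ^ 2 := by omega
        exact h3 (Nat.prime_three.dvd_of_dvd_pow h4)) (by
        intro p pp h1 h2 h4
        have h5 := (Nat.dvd_add_right h1).1 h2
        have h6 : p ∣ 18 * e ^ 2 := Dvd.dvd.mul_left (dvd_pow h4 (by norm_num)) _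
        have h7 := (Nat.dvd_add_left h6).1 h5
        rcases (Nat.Prime.dvd_mul pp).1 h7 with h8 | h8
        · have : p ∣ 2 := pp.dvd_of_dvd_pow (show p ∣ 2 ^ 2 from h8)
          have : p = 2 := (Nat.prime_dvd_prime_iff_eq pp Nat.prime_two).1 this
          subst this
          omega
        · exact hco p pp (pp.dvd_of_dvd_pow h8) h4)
    obtain ⟨a, b, hab, ⟨h1, h2⟩ | ⟨h1, h2⟩⟩ := aux_split _ _ _ hcop hu
    · exact (aux_mod3 a b M 4 (6 * e ^ 2) rfl h3 (by rw [← h1, ← h2]; ring)).elim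
    · rw [h2, h1] at hcop
      obtain ⟨h4, h5⟩ := aux_cop' b a hcop.symm
      refine ⟨a, b, 2 * M, h4, h5, ?_, hab ▸ dvd_rfl⟩
      rw [← h2, h1, ← hab]; ring

theorem aux_B (f g K : ℕ) (hc : Nat.Coprime g f) (h3 : ¬ 3 ∣ g)
    (h : K ^ 2 + 18 * f ^ 2 * g ^ 2 + 27 * f ^ 4 = g ^ 4) :
    ∃ a b : ℕ, a * b = f ∧ Nat.Coprime a b ∧ a ^ 4 + 9 * a ^ 2 * b ^ 2 + 27 * b ^ 4 = g ^ 2 := by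
  have hg : 0 < g := Nat.pos_of_ne_zero (by rintro rfl; simp at h3)
  have hle : 9 * f ^ 2 ≤ g ^ 2 := by
    have hg2 : 0 < g ^ 2 := by positivity
    have : 18 * f ^ 2 * g ^ 2 ≤ g ^ 2 * g ^ 2 := by nlinarith [sq_nonneg K, sq_nonneg (f ^ 2)]
    have := Nat.le_of_mul_le_mul_right this hg2
    omega
  obtain ⟨G, hG⟩ := Nat.exists_eq_add_of_le hle
  have hGK : G ^ 2 = K ^ 2 + 108 * f ^ 4 := by
    have : g ^ 4 = (g ^ 2) ^ 2 := by ring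
    rw [this, hG] at h
    nlinarith
  have hKG : K ≤ G := by
    by_contra hlt
    push Not at hlt
    nlinarith [sq_nonneg (f ^ 2)]
  obtain ⟨U, rfl⟩ := Nat.exists_eq_add_of_le hKG
  have hUe : 2 ∣ U := by
    have h1 : 2 ∣ U * U := by
      have : U * U + 2 * (U * K) = 2 * (54 * f ^ 4) := by nlinarith
      omega
    rcases (Nat.Prime.dvd_mul Nat.prime_two).1 h1 with h | h <;> exact h
  obtain ⟨u, rfl⟩ := hUe
  have hu : u * (u + K) = 27 * f ^ 4 := by nlinarith
  have hcop := aux_cop _ _ _ hu (by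
      rintro ⟨h1, h2⟩
      have h4 : 3 ∣ g ^ 2 := by omega
      exact h3 (Nat.prime_three.dvd_of_dvd_pow h4)) (by
      intro p pp h1 h2 h4
      have h5 : p ∣ g ^ 2 := by
        have : g ^ 2 = 9 * f ^ 2 + (u + (u + K)) := by rw [hG]; ring
        rw [this]
        exact dvd_add (Dvd.dvd.mul_left (dvd_pow h4 (by norm_num)) _) (dvd_add h1 h2)
      exact Nat.not_coprime_of_dvd_of_dvd pp.one_lt (pp.dvd_of_dvd_pow h5) h4 hc)
  have hg2 : g ^ 2 = 9 * f ^ 2 + (u + (u + K)) := by rw [hG]; ring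
  obtain ⟨a, b, hab, ⟨h1, h2⟩ | ⟨h1, h2⟩⟩ := aux_split _ _ _ hcop hu
  · rw [h2, h1] at hcop
    refine ⟨a, b, hab, (aux_cop' a b hcop).1, ?_⟩
    rw [hg2, h2, h1, ← hab]; ring
  · rw [h2, h1] at hcop
    refine ⟨b, a, by rw [mul_comm, hab], (aux_cop' b a hcop.symm).1, ?_⟩
    rw [hg2, h2, h1, ← hab]; ring

theorem aux_not3 (M e N : ℕ) (hc : Nat.Coprime M e)
    (h : M ^ 4 + 9 * M ^ 2 * e ^ 2 + 27 * e ^ 4 = N ^ 2) : ¬ 3 ∣ M := by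
  rintro ⟨m, rfl⟩
  have he : ¬ 3 ∣ e := fun he =>
    Nat.not_coprime_of_dvd_of_dvd (by norm_num : 1 < 3) (Dvd.intro m rfl) he hc
  have h1 : 3 ∣ N := by
    apply Nat.prime_three.dvd_of_dvd_pow (n := 2)
    rw [← h]
    exact ⟨27 * m ^ 4 + 27 * m ^ 2 * e ^ 2 + 9 * e ^ 4, by ring⟩
  obtain ⟨n, rfl⟩ := h1
  have h2 : 3 ∣ n := by
    apply Nat.prime_three.dvd_of_dvd_pow (n := 2)
    exact ⟨3 * m ^ 4 + 3 * m ^ 2 * e ^ 2 + e ^ 4, by nlinarith⟩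
  obtain ⟨n, rfl⟩ := h2
  have h4 : 3 ∣ e ^ 4 := by
    have : 3 * (m ^ 4) + 3 * (m ^ 2 * e ^ 2) + e ^ 4 = 3 * n ^ 2 := by nlinarith
    omega
  exact he (Nat.prime_three.dvd_of_dvd_pow h4)

theorem aux_main (e : ℕ) : ∀ M N : ℕ, Nat.Coprime M e →
    M ^ 4 + 9 * M ^ 2 * e ^ 2 + 27 * e ^ 4 = N ^ 2 → e = 0 := by
  induction e using Nat.strong_induction_on with
  | _ e ih =>
    intro M N hc h
    by_contra he
    obtain ⟨f, g, K, hgf, hg3, hK, hfg⟩ := aux_A M e N hc (aux_not3 M e N hc h) h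
    obtain ⟨a, b, hab, hcab, hI⟩ := aux_B f g K hgf hg3 hK
    have hpos : 0 < e := Nat.pos_of_ne_zero he
    have hle : f * g ≤ e := Nat.le_of_dvd hpos hfg
    have hfg0 : f * g ≠ 0 := fun h0 => he (Nat.eq_zero_of_zero_dvd (h0 ▸ hfg))
    have hf0 : f ≠ 0 := left_ne_zero_of_mul hfg0
    have hb : 0 < b := Nat.pos_of_ne_zero (by rintro rfl; exact hf0 (by rw [← hab, mul_zero]))
    have ha : 0 < a := Nat.pos_of_ne_zero (by rintro rfl; exact hf0 (by rw [← hab, zero_mul]))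
    have hg : 1 < g := by
      by_contra hg
      have h1 : g ^ 2 ≤ 1 := Nat.pow_le_one_iff (by norm_num) |>.2 (by omega)
      have h2 : 0 < b ^ 4 := by positivity
      have := Nat.zero_le (a ^ 4 + 9 * a ^ 2 * b ^ 2)
      omega
    have hbf : b ≤ f := by nlinarith
    have hlt : b < e := by nlinarith
    exact hb.ne' (ih b hlt a g hcab hI)

theorem aux_nat (a b c : ℕ) (hc : Nat.Coprime a b) (hba : b < a)
    (h : 3 * a ^ 6 = 3 * b ^ 6 + c ^ 2) : False := by
  obtain ⟨D, hD⟩ := Nat.exists_eq_add_of_le (Nat.pow_le_pow_left hba.le 2)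
  have hcD : Nat.Coprime D b := by
    have h1 : Nat.Coprime (a ^ 2) (b ^ 2) := Nat.Coprime.pow 2 2 hc
    rw [hD] at h1
    have h2 : Nat.Coprime D (b ^ 2) := Nat.coprime_self_add_left.1 h1
    exact (Nat.coprime_pow_right_iff (by norm_num) _ _).1 h2
  have h1 : a ^ 6 = (a ^ 2) ^ 3 := by ring
  rw [h1, hD] at h
  have h2 : 3 * (D * (D ^ 2 + 3 * D * b ^ 2 + 3 * b ^ 4)) = c ^ 2 := by nlinarith
  have h3c : 3 ∣ c := Nat.prime_three.dvd_of_dvd_pow (Dvd.intro _ h2)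
  obtain ⟨c, rfl⟩ := h3c
  have h3D : 3 ∣ D := by
    apply Nat.prime_three.dvd_of_dvd_pow (n := 3)
    have : D ^ 3 + 3 * (D ^ 2 * b ^ 2 + D * b ^ 4) = 3 * c ^ 2 := by nlinarith
    omega
  have h3b : ¬ 3 ∣ b := fun hb => Nat.not_coprime_of_dvd_of_dvd (by norm_num : 1 < 3) h3D hb hcD
  obtain ⟨E, rfl⟩ := h3D
  have h4 : (3 * E) * (b ^ 4 + (E + b ^ 2) * (3 * E)) = c ^ 2 := by nlinarith
  have hcop : Nat.Coprime (3 * E) (b ^ 4 + (E + b ^ 2) * (3 * E)) := by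
    rw [Nat.coprime_add_mul_right_right]
    exact Nat.Coprime.pow_right 4 hcD
  obtain ⟨n, hn⟩ := exists_eq_pow_of_mul_eq_pow (Nat.isUnit_iff.2 hcop) h4
  obtain ⟨m, hm⟩ := exists_eq_pow_of_mul_eq_pow (Nat.isUnit_iff.2 hcop.symm)
      ((mul_comm _ _).trans h4)
  have h3n : 3 ∣ n := Nat.prime_three.dvd_of_dvd_pow (Dvd.intro _ hn)
  obtain ⟨k, rfl⟩ := h3n
  have hE : E = 3 * k ^ 2 := by nlinarith
  subst hE
  have hbk : Nat.Coprime b k := by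
    have h5 : Nat.Coprime (k * (9 * k)) b := by
      have : 3 * (3 * k ^ 2) = k * (9 * k) := by ring
      rwa [this] at hcD
    exact (Nat.Coprime.coprime_mul_right h5).symm
  have hk := aux_main k b m hbk (by rw [← hm]; ring)
  subst hk
  nlinarith

/-- If `t, x` are rational with `t ≠ 0` and
`x² = 2⁸·3⁵·((t − 1)(t + 1)(t² − t + 1)(t² + t + 1))³`, then `t = 1` or `t = −1`. -/
theorem stmt_17 (t x : ℚ) (ht : t ≠ 0)
    (h : x ^ 2 = 2 ^ 8 * 3 ^ 5 * ((t - 1) * (t + 1) * (t ^ 2 - t + 1) * (t ^ 2 + t + 1)) ^ 3) :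
    t = 1 ∨ t = -1 := by
  have h0 : (t - 1) * (t + 1) * (t ^ 2 - t + 1) * (t ^ 2 + t + 1) = t ^ 6 - 1 := by ring
  rw [h0] at h
  by_contra hne
  push Not at hne
  have ht2 : t ^ 2 ≠ 1 := fun h1 => by
    rcases (sq_eq_sq_iff_eq_or_eq_neg.1 (h1.trans (one_pow 2).symm)) with h | h
    · exact hne.1 h
    · exact hne.2 h
  have hs : t ^ 6 - 1 ≠ 0 := by
    rw [← h0]
    have h1 : t ^ 2 - t + 1 ≠ 0 := by nlinarith [sq_nonneg (t - 1 / 2)]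
    have h2 : t ^ 2 + t + 1 ≠ 0 := by nlinarith [sq_nonneg (t + 1 / 2)]
    have h3 : t - 1 ≠ 0 := sub_ne_zero.2 hne.1
    have h4 : t + 1 ≠ 0 := fun h => hne.2 (by linarith)
    positivity
  obtain ⟨y, hy⟩ : ∃ y : ℚ, y ^ 2 = 3 * (t ^ 6 - 1) := by
    refine ⟨x / (144 * (t ^ 6 - 1)), ?_⟩
    rw [div_pow, h]
    field_simp
    ring
  have hb0 : (t.den : ℚ) ≠ 0 := by exact_mod_cast t.den_nz
  have hteq : t * t.den = t.num := Rat.mul_den_eq_num t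
  have hsq : IsSquare ((3 * (t.num ^ 6 - (t.den : ℤ) ^ 6) : ℤ) : ℚ) := by
    refine ⟨y * t.den ^ 3, ?_⟩
    push_cast
    rw [← hteq]
    linear_combination (-(t.den : ℚ) ^ 6) * hy
  rw [Rat.isSquare_intCast_iff] at hsq
  obtain ⟨w, hw⟩ := hsq
  have hnat : 3 * t.num.natAbs ^ 6 = 3 * t.den ^ 6 + w.natAbs ^ 2 := by
    zify
    have : |t.num| ^ 6 = t.num ^ 6 := Even.pow_abs (by decide) _
    rw [this, sq_abs]
    linarith
  have hne' : t.num.natAbs ≠ t.den := by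
    intro heq
    apply ht2
    have h1 : (t.num : ℚ) ^ 2 = (t.den : ℚ) ^ 2 := by
      have : t.num ^ 2 = (t.den : ℤ) ^ 2 := by rw [← heq]; simp
      exact_mod_cast this
    rw [← hteq, mul_pow] at h1
    exact mul_right_cancel₀ (pow_ne_zero 2 hb0) (by rw [h1, one_mul])
  have hle : t.den ≤ t.num.natAbs := by
    have : t.den ^ 6 ≤ t.num.natAbs ^ 6 := by have := Nat.zero_le (w.natAbs ^ 2); omega
    exact (Nat.pow_le_pow_iff_left (by norm_num)).1 this
  exact aux_nat _ _ _ t.reduced (lt_of_le_of_ne hle (Ne.symm hne')) hnat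
end
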